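/- Let Ḡ = ⟨x, z | z = [x,z]² ⟩ and let H̄ be the normal closure of z in Ḡ. Then H̄ is generated by the elements z_i = x^i z x^{-i} (i ∈ ℤ), and H̄ is isomorphic to the presented group A = ⟨ u_i (i ∈ ℤ) | u_{i+1}² = u_i³ (i ∈ ℤ) ⟩ via an isomorphism sending u_i to z_{i+1} z_i⁻¹. -/

import Mathlib

open scoped commutatorElement in
/-- The single relator `z ([x,z]²)⁻¹` in the free group on two generators
(generator `0` plays the role of `x`, generator `1` the role of `z`). -/
def gbarRels : Set (FreeGroup (Fin 2)) :=
  {FreeGroup.of 1 * (⁅(FreeGroup.of 0 : FreeGroup (Fin 2)), FreeGroup.of 1⁆ ^ 2)⁻¹}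

/-- The group `Ḡ = ⟨x, z | z = [x,z]²⟩`. -/
abbrev GBar := PresentedGroup gbarRels

/-- `x ∈ Ḡ`. -/
def gbarX : GBar := PresentedGroup.of 0

/-- `z ∈ Ḡ`. -/
def gbarZ : GBar := PresentedGroup.of 1

/-- `z_i = x^i z x^{-i} ∈ Ḡ`, for `i ∈ ℤ`. -/
def gbarZi (i : ℤ) : GBar := gbarX ^ i * gbarZ * gbarX ^ (-i)

/-- The relators `u_{i+1}² u_i⁻³` (`i ∈ ℤ`) in the free group on generators
`u_i` indexed by `ℤ`. -/
def aRels : Set (FreeGroup ℤ) :=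
  Set.range fun i : ℤ => FreeGroup.of (i + 1) ^ 2 * (FreeGroup.of i ^ 3)⁻¹

/-- The group `A = ⟨ u_i (i ∈ ℤ) | u_{i+1}² = u_i³ ⟩`. -/
abbrev AGroup := PresentedGroup aRels

lemma gb_rel : gbarZ = (gbarX * gbarZ * gbarX⁻¹ * gbarZ⁻¹) ^ 2 := by
  have h : PresentedGroup.mk gbarRels _ = 1 :=
    PresentedGroup.one_of_mem (rels := gbarRels) (Set.mem_singleton _)
  rw [map_mul, map_inv, mul_inv_eq_one] at h
  rw [map_pow, commutatorElement_def] at h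
  simp only [map_mul, map_inv] at h
  exact h

lemma gb_zi_sq (i : ℤ) : gbarZi i = (gbarZi (i + 1) * (gbarZi i)⁻¹) ^ 2 := by
  have h := congrArg (MulAut.conj (gbarX ^ i)) gb_rel
  rw [map_pow] at h
  simp only [MulAut.conj_apply] at h
  have e1 : gbarZi i = gbarX ^ i * gbarZ * (gbarX ^ i)⁻¹ := by simp [gbarZi]
  have e2 : gbarZi (i + 1) * (gbarZi i)⁻¹
      = gbarX ^ i * (gbarX * gbarZ * gbarX⁻¹ * gbarZ⁻¹) * (gbarX ^ i)⁻¹ := by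
    simp only [gbarZi, zpow_neg, zpow_add, zpow_one]
    group
  rw [e2, e1]
  exact h

lemma gb_zi_conj (k i : ℤ) : gbarX ^ k * gbarZi i * (gbarX ^ k)⁻¹ = gbarZi (k + i) := by
  simp only [gbarZi, zpow_neg, zpow_add]
  group

lemma a_rel (i : ℤ) : (PresentedGroup.of (i + 1) : AGroup) ^ 2 = PresentedGroup.of i ^ 3 := by
  have h : PresentedGroup.mk aRels _ = 1 :=
    PresentedGroup.one_of_mem (rels := aRels) ⟨i, rfl⟩
  rw [map_mul, map_inv, mul_inv_eq_one, map_pow, map_pow] at h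
  exact h

def aLift {G : Type*} [Group G] (f : ℤ → G) (h : ∀ i, f (i + 1) ^ 2 = f i ^ 3) : AGroup →* G :=
  PresentedGroup.toGroup (f := f) (by
    rintro _ ⟨i, rfl⟩
    simp [h])

lemma aLift_of {G : Type*} [Group G] (f : ℤ → G) (h : ∀ i, f (i + 1) ^ 2 = f i ^ 3) (i : ℤ) :
    aLift f h (PresentedGroup.of i) = f i := PresentedGroup.toGroup.of _

def aSh (n : ℤ) : AGroup →* AGroup :=
  aLift (fun i => PresentedGroup.of (i + n)) (fun i => by
    have := a_rel (i + n)
    rwa [add_right_comm] at this)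

lemma aSh_of (n i : ℤ) : aSh n (PresentedGroup.of i) = PresentedGroup.of (i + n) := aLift_of _ _ _

def aShift : MulAut AGroup :=
  MonoidHom.toMulEquiv (aSh 1) (aSh (-1))
    (by ext i; simp [aSh_of]) (by ext i; simp [aSh_of])

lemma aShift_of (i : ℤ) : aShift (PresentedGroup.of i) = PresentedGroup.of (i + 1) := aSh_of 1 i

lemma aShift_zpow_of (k i : ℤ) :
    (aShift ^ k) (PresentedGroup.of i) = PresentedGroup.of (i + k) := by
  induction k using Int.induction_on generalizing i with
  | zero => simp
  | succ k ih =>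
    rw [zpow_add_one, MulAut.mul_apply, aShift_of, ih]
    congr 1; ring
  | pred k ih =>
    rw [zpow_sub_one, MulAut.mul_apply]
    have : aShift⁻¹ (PresentedGroup.of i) = PresentedGroup.of (i - 1) := by
      rw [MulAut.inv_apply, MulEquiv.symm_apply_eq, aShift_of, sub_add_cancel]
    rw [this, ih]
    congr 1; ring

abbrev ASemi := AGroup ⋊[zpowersHom (MulAut AGroup) aShift] (Multiplicative ℤ)

def sT : ASemi := SemidirectProduct.inr (Multiplicative.ofAdd 1)
def sU (i : ℤ) : ASemi := SemidirectProduct.inl (PresentedGroup.of i)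

lemma sU_conj (k i : ℤ) : sT ^ k * sU i * (sT ^ k)⁻¹ = sU (i + k) := by
  unfold sT sU
  rw [← map_zpow, ← map_inv, ← SemidirectProduct.inl_aut, zpowersHom_apply, ← aShift_zpow_of]
  simp

lemma sU_rel (i : ℤ) : sU (i + 1) ^ 2 = sU i ^ 3 := by
  unfold sU
  rw [← map_pow, ← map_pow, a_rel]

lemma sU_rel' (i : ℤ) : sU (i + 1) ^ 2 * (sU i ^ 2)⁻¹ = sU i := by
  rw [sU_rel]; group

def gbToSemi : GBar →* ASemi :=
  PresentedGroup.toGroup (f := ![sT, sU 0 ^ 2]) (by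
    rintro _ rfl
    have h := sU_conj 1 0
    rw [zpow_one] at h
    rw [map_mul, map_inv, map_pow, map_commutatorElement, mul_inv_eq_one]
    simp only [FreeGroup.lift_apply_of, Matrix.cons_val_zero, Matrix.cons_val_one,
      commutatorElement_def]
    rw [← conj_pow, h, sU_rel'])

lemma gbToSemi_X : gbToSemi gbarX = sT := PresentedGroup.toGroup.of _
lemma gbToSemi_Z : gbToSemi gbarZ = sU 0 ^ 2 := PresentedGroup.toGroup.of _

lemma gbToSemi_Zi (i : ℤ) : gbToSemi (gbarZi i) = sU i ^ 2 := by
  rw [gbarZi, map_mul, map_mul, map_zpow, map_zpow, gbToSemi_X, gbToSemi_Z, zpow_neg,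
    ← conj_pow, sU_conj, zero_add]

def aToGb : AGroup →* GBar :=
  aLift (fun i => gbarZi (i + 1) * (gbarZi i)⁻¹) (fun i => by
    rw [← gb_zi_sq (i + 1), pow_succ', ← gb_zi_sq i]
    group)

lemma aToGb_of (i : ℤ) : aToGb (PresentedGroup.of i) = gbarZi (i + 1) * (gbarZi i)⁻¹ :=
  aLift_of _ _ _

lemma aToGb_inj : Function.Injective aToGb := by
  have h : gbToSemi.comp aToGb = SemidirectProduct.inl := by
    ext1 i
    rw [MonoidHom.comp_apply, aToGb_of, map_mul, map_inv, gbToSemi_Zi, gbToSemi_Zi, sU_rel']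
    rfl
  have h2 : Function.Injective (gbToSemi.comp aToGb) := by
    rw [h]; exact SemidirectProduct.inl_injective
  exact Function.Injective.of_comp (f := gbToSemi) h2

lemma aToGb_range : aToGb.range = Subgroup.closure (Set.range gbarZi) := by
  apply le_antisymm
  · rw [MonoidHom.range_eq_map, ← PresentedGroup.closure_range_of, MonoidHom.map_closure,
      Subgroup.closure_le]
    rintro _ ⟨_, ⟨i, rfl⟩, rfl⟩
    rw [aToGb_of]
    exact mul_mem (Subgroup.subset_closure ⟨_, rfl⟩)
      (inv_mem (Subgroup.subset_closure ⟨_, rfl⟩))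
  · rw [Subgroup.closure_le]
    rintro _ ⟨i, rfl⟩
    refine ⟨PresentedGroup.of i ^ 2, ?_⟩
    rw [map_pow, aToGb_of, ← gb_zi_sq]

lemma gb_conj_mem (k : ℤ) (n : GBar) (hn : n ∈ Subgroup.closure (Set.range gbarZi)) :
    gbarX ^ k * n * (gbarX ^ k)⁻¹ ∈ Subgroup.closure (Set.range gbarZi) := by
  have : Subgroup.closure (Set.range gbarZi) ≤
      (Subgroup.closure (Set.range gbarZi)).comap (MulAut.conj (gbarX ^ k)).toMonoidHom := by
    rw [Subgroup.closure_le]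
    rintro _ ⟨i, rfl⟩
    refine Subgroup.subset_closure ⟨k + i, ?_⟩
    rw [← gb_zi_conj]
    rfl
  exact this hn

lemma gb_closure_normal : (Subgroup.closure (Set.range gbarZi)).Normal := by
  rw [← Subgroup.normalizer_eq_top_iff, eq_top_iff, ← PresentedGroup.closure_range_of,
    Subgroup.closure_le]
  rintro _ ⟨j, rfl⟩
  fin_cases j
  · change gbarX ∈ _
    rw [SetLike.mem_coe, Subgroup.mem_normalizer_iff]
    intro h
    constructor
    · intro hh
      simpa using gb_conj_mem 1 h hh
    · intro hh
      have := gb_conj_mem (-1) _ hh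
      simpa [mul_assoc] using this
  · change gbarZ ∈ _
    apply Subgroup.le_normalizer
    exact Subgroup.subset_closure ⟨0, by simp [gbarZi]⟩

lemma gb_eq : Subgroup.normalClosure {gbarZ} = Subgroup.closure (Set.range gbarZi) := by
  apply le_antisymm
  · have := gb_closure_normal
    apply Subgroup.normalClosure_le_normal
    rintro _ rfl
    exact Subgroup.subset_closure ⟨0, by simp [gbarZi]⟩
  · rw [Subgroup.closure_le]
    rintro _ ⟨i, rfl⟩
    have := (Subgroup.normalClosure_normal (s := {gbarZ})).conj_mem gbarZ
      (Subgroup.subset_normalClosure rfl) (gbarX ^ i)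
    simpa [gbarZi] using this

/-- In `Ḡ = ⟨x, z | z = [x,z]²⟩`, the normal closure `H̄` of `z` is generated by
the elements `z_i = x^i z x^{-i}` (`i ∈ ℤ`), and `H̄` is isomorphic to
`A = ⟨ u_i (i ∈ ℤ) | u_{i+1}² = u_i³ ⟩` via an isomorphism sending `u_i` to
`z_{i+1} z_i⁻¹`. -/
theorem normalClosure_z_eq_closure_zi_and_iso :
    Subgroup.normalClosure {gbarZ} = Subgroup.closure (Set.range gbarZi) ∧
    ∃ e : AGroup ≃* ↥(Subgroup.normalClosure {gbarZ}),
      ∀ i : ℤ, (e (PresentedGroup.of i) : GBar) = gbarZi (i + 1) * (gbarZi i)⁻¹ := by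
  refine ⟨gb_eq, (MonoidHom.ofInjective aToGb_inj).trans
    (MulEquiv.subgroupCongr (aToGb_range.trans gb_eq.symm)), fun i => ?_⟩
  exact aToGb_of i
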